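/- Let d ≥ 1, let g ∈ C_b^∞(ℝ^d), let γ ∈ ℕ^d be a multi-index, and let B₁, B₂ be bounded subsets of 𝒢(ℝ^d). Then the family {π₁ *_{g,γ} π₂ : π₁ ∈ B₁, π₂ ∈ B₂} is a bounded subset of 𝓗_{|γ|}(ℝ^d): for every (s,t) ∈ 𝒯₁ and every π₁ ∈ B₁, π₂ ∈ B₂ the function (x,y) ↦ (π₁ *_{g,γ} π₂)(s,t,x,y) is infinitely differentiable, and for each pair of multi-indices α, β ∈ ℕ^d there exist constants c₁ ≥ 0 and c₂ > 0, independent of π₁ ∈ B₁ and π₂ ∈ B₂, such that |∂_x^α ∂_y^β (π₁ *_{g,γ} π₂)(s,t,x,y)| ≤ c₁ t^{−(|α|+|β|+d+|γ|)/2} exp(−c₂‖x−y‖²/t) for all (s,t) ∈ 𝒯₁ and x, y ∈ ℝ^d. -/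

import Mathlib

open MeasureTheory Real

noncomputable section

/-- `ℝ^d` with the Euclidean norm. -/
abbrev Eu (d : ℕ) := EuclideanSpace ℝ (Fin d)

/-- Iterated partial derivative along a list of coordinate directions. -/
noncomputable def pderivs {d : ℕ} : List (Fin d) → (Eu d → ℝ) → Eu d → ℝ
  | [], f => f
  | i :: l, f => pderivs l fun x => fderiv ℝ f x (EuclideanSpace.single i 1)

/-- The list of coordinates (with multiplicities) associated to a multi-index `m : ℕ^d`. -/
def mToList {d : ℕ} (m : Fin d → ℕ) : List (Fin d) :=
  (List.finRange d).flatMap fun i => List.replicate (m i) i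

/-- The partial derivative `∂^m` associated to a multi-index `m : ℕ^d`. -/
noncomputable def pderivM {d : ℕ} (m : Fin d → ℕ) (f : Eu d → ℝ) : Eu d → ℝ :=
  pderivs (mToList m) f

/-- The length `|m| = m₁ + ⋯ + m_d` of a multi-index. -/
def mlen {d : ℕ} (m : Fin d → ℕ) : ℕ := ∑ i, m i

/-- Mixed partial derivative `∂_x^α ∂_y^β f(x,y)` of a function of two `ℝ^d` variables. -/
noncomputable def D2 {d : ℕ} (α β : Fin d → ℕ) (f : Eu d → Eu d → ℝ) (x y : Eu d) : ℝ :=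
  pderivM α (fun x' => pderivM β (f x') y) x

/-- The space convolution `(π₁ *_{g,γ} π₂)(s,t,x,y) = ∫ g(z) π₁(s,x,z) ∂_z^γ π₂(t-s,z,y) dz`. -/
noncomputable def convG {d : ℕ} (g : Eu d → ℝ) (γ : Fin d → ℕ)
    (π₁ π₂ : ℝ → Eu d → Eu d → ℝ) (s t : ℝ) (x y : Eu d) : ℝ :=
  ∫ z : Eu d, g z * (π₁ s x z * pderivM γ (fun z' => π₂ (t - s) z' y) z)

/-!
In `∫ g(z) π₁(s, x, z) ∂_z^γ π₂(t - s, z, y) dz` one of the two times `s`, `t - s` is at least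
`t / 2`, and every derivative has to be taken by the kernel with that time, since each costs a
factor `time ^ (-1 / 2)`.

If `t - s ≥ t / 2`, substitute `z = x + √s w`. The first kernel becomes
`s^(d/2) π₁(s, x, x + √s w)`, whose `x`-derivatives are bounded by a Gaussian in `w` without any
loss in `s`: this is the second estimate in the definition of `𝒢`. The second kernel becomes
`∂_z^γ π₂(t - s, x + √s w, y)`, whose derivatives in `x` and `y` cost only powers of `t - s`.
Differentiation under the integral sign and the inequality `(a + σ b)² / (σ² + τ) ≤ a² / τ + b²`,
with `σ² = s` and `τ = t - s`, give the bound.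

If `s ≥ t / 2`, integrate by parts to move `∂_z^γ` onto `g π₁`. Exchanging `x` and `y` then leads
back to the previous situation; the near-diagonal estimate is stable under this exchange because
`π(z + σ w, z)` is the translate by `σ w` of `π(z, z - σ w)`.
-/

section Derivatives

variable {ι κ E F G : Type*} [NormedAddCommGroup E] [NormedSpace ℝ E] [NormedAddCommGroup F]
  [NormedSpace ℝ F] [NormedAddCommGroup G] [NormedSpace ℝ G]

/-- The iterated directional derivative of `f` along the directions `v i`, for `i` running
through a list; the head of the list is differentiated first. -/
def dirDerivs (v : ι → E) : List ι → (E → F) → E → F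
  | [], f => f
  | i :: l, f => dirDerivs v l fun x => fderiv ℝ f x (v i)

theorem contDiff_fderiv_apply_const {n : ℕ} {f : E → F} (hf : ContDiff ℝ (n + 1 : ℕ) f) (v : E) :
    ContDiff ℝ n fun x => fderiv ℝ f x v :=
  (hf.fderiv_right (m := n) (by norm_cast)).clm_apply contDiff_const

theorem contDiff_dirDerivs {n : ℕ} {v : ι → E} {l : List ι} {f : E → F}
    (hf : ContDiff ℝ (n + l.length : ℕ) f) : ContDiff ℝ n (dirDerivs v l f) := by
  induction l generalizing f with
  | nil => exact hf
  | cons i l ih => exact ih (contDiff_fderiv_apply_const hf (v i))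

theorem dirDerivs_append (v : ι → E) (l₁ l₂ : List ι) (f : E → F) :
    dirDerivs v (l₁ ++ l₂) f = dirDerivs v l₂ (dirDerivs v l₁ f) := by
  induction l₁ generalizing f with
  | nil => rfl
  | cons i _ ih => exact ih _

theorem dirDerivs_map (v : ι → E) (e : κ → ι) (l : List κ) (f : E → F) :
    dirDerivs v (l.map e) f = dirDerivs (v ∘ e) l f := by
  induction l generalizing f with
  | nil => rfl
  | cons i _ ih => exact ih _

theorem dirDerivs_comp_affine (v : ι → G) (L : G →L[ℝ] E) (a : E) (l : List ι) {f : E → F}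
    (hf : ContDiff ℝ l.length f) :
    dirDerivs v l (fun x => f (L x + a)) = fun x => dirDerivs (L ∘ v) l f (L x + a) := by
  induction l generalizing f with
  | nil => rfl
  | cons i l ih =>
    have hdf : Differentiable ℝ f := hf.differentiable (by simp)
    have hfderiv (x : G) :
        fderiv ℝ (fun x => f (L x + a)) x (v i) = fderiv ℝ f (L x + a) (L (v i)) := by
      have hL : HasFDerivAt (fun x => L x + a) L x := L.hasFDerivAt.add_const a
      exact DFunLike.congr_fun ((hdf _).hasFDerivAt.comp x hL).fderiv (v i)
    simp only [dirDerivs, hfderiv]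
    exact ih (contDiff_fderiv_apply_const hf (L (v i)))

theorem dirDerivs_perm (v : ι → E) {l l' : List ι} (h : l.Perm l') {f : E → F}
    (hf : ContDiff ℝ l.length f) : dirDerivs v l f = dirDerivs v l' f := by
  induction h generalizing f with
  | nil => rfl
  | cons i _ ih => exact ih (contDiff_fderiv_apply_const hf (v i))
  | trans h _ ih₁ ih₂ => exact (ih₁ hf).trans (ih₂ (h.length_eq ▸ hf))
  | swap i j l =>
    have hf₂ : ContDiff ℝ 2 f := hf.of_le (by norm_cast; simp)
    have hd : Differentiable ℝ (fderiv ℝ f) :=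
      (hf₂.fderiv_right (m := 1) (by norm_num)).differentiable (by simp)
    have hsymm (x : E) : fderiv ℝ (fun y => fderiv ℝ f y (v j)) x (v i) =
        fderiv ℝ (fun y => fderiv ℝ f y (v i)) x (v j) := by
      have := (hf₂.contDiffAt (x := x)).isSymmSndFDerivAt (by simp)
      rw [fderiv_clm_apply (hd x) (differentiableAt_const _),
        fderiv_clm_apply (hd x) (differentiableAt_const _)]
      simpa using this.eq (v i) (v j)
    simp only [dirDerivs, hsymm]

/-- `DerivLE n f A`: the function `f` is of class `C^n` and its derivatives of order at most `n`
at `x` have norm at most `A x`. Including the smoothness makes this relation stable under the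
operations on functions used below. -/
structure DerivLE (n : ℕ) (f : E → F) (A : E → ℝ) : Prop where
  contDiff : ContDiff ℝ n f
  norm_le : ∀ k ≤ n, ∀ x, ‖iteratedFDeriv ℝ k f x‖ ≤ A x

namespace DerivLE

variable {n m : ℕ} {f : E → F} {A B : E → ℝ}

theorem norm_apply_le (h : DerivLE n f A) (x : E) : ‖f x‖ ≤ A x := by
  simpa using h.norm_le 0 (Nat.zero_le n) x

theorem nonneg (h : DerivLE n f A) (x : E) : 0 ≤ A x :=
  (norm_nonneg _).trans (h.norm_apply_le x)

theorem continuous (h : DerivLE n f A) : Continuous f :=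
  h.contDiff.continuous

theorem mono (h : DerivLE n f A) (hmn : m ≤ n) (hAB : ∀ x, A x ≤ B x) : DerivLE m f B where
  contDiff := h.contDiff.of_le (by exact_mod_cast hmn)
  norm_le k hk x := (h.norm_le k (hk.trans hmn) x).trans (hAB x)

theorem mul {f g : E → ℝ} (hf : DerivLE n f A) (hg : DerivLE n g B) :
    DerivLE n (fun x => f x * g x) fun x => 2 ^ n * (A x * B x) where
  contDiff := hf.contDiff.mul hg.contDiff
  norm_le k hk x := by
    have hA := hf.nonneg x
    have hB := hg.nonneg x
    calc ‖iteratedFDeriv ℝ k (fun x => f x * g x) x‖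
        ≤ ∑ i ∈ Finset.range (k + 1), (k.choose i : ℝ) * ‖iteratedFDeriv ℝ i f x‖ *
            ‖iteratedFDeriv ℝ (k - i) g x‖ :=
          norm_iteratedFDeriv_mul_le hf.contDiff hg.contDiff x (by exact_mod_cast hk)
      _ ≤ ∑ i ∈ Finset.range (k + 1), (k.choose i : ℝ) * (A x * B x) := by
          simp only [mul_assoc]
          gcongr with i hi
          · exact hf.norm_le i (by grind) x
          · exact hg.norm_le (k - i) (by omega) x
      _ = 2 ^ k * (A x * B x) := by
          rw [← Finset.sum_mul, ← Nat.cast_sum, Nat.sum_range_choose, Nat.cast_pow, Nat.cast_two]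
      _ ≤ 2 ^ n * (A x * B x) := by gcongr; norm_num

theorem const_smul (h : DerivLE n f A) (c : ℝ) :
    DerivLE n (fun x => c • f x) fun x => |c| * A x where
  contDiff := h.contDiff.const_smul c
  norm_le k hk x := by
    have hfk := (h.contDiff.of_le (m := k) (by exact_mod_cast hk)).contDiffAt (x := x)
    have hsmul : iteratedFDeriv ℝ k (fun x => c • f x) x = c • iteratedFDeriv ℝ k f x :=
      iteratedFDeriv_const_smul_apply hfk
    rw [hsmul, norm_smul, Real.norm_eq_abs]
    gcongr
    exact h.norm_le k hk x

theorem comp_affine (h : DerivLE n f A) {L : G →L[ℝ] E} (hL : ‖L‖ ≤ 1) (a : E) :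
    DerivLE n (fun x => f (L x + a)) fun x => A (L x + a) where
  contDiff := h.contDiff.comp (L.contDiff.add contDiff_const)
  norm_le k hk x := by
    have hfa : ContDiff ℝ n fun y => f (y + a) := h.contDiff.comp (contDiff_id.add contDiff_const)
    have hcomp := L.iteratedFDeriv_comp_right hfa x (i := k) (by exact_mod_cast hk)
    change ‖iteratedFDeriv ℝ k ((fun y => f (y + a)) ∘ L) x‖ ≤ _
    rw [hcomp, iteratedFDeriv_comp_add_right]
    calc ‖(iteratedFDeriv ℝ k f (L x + a)).compContinuousLinearMap fun _ => L‖
        ≤ ‖iteratedFDeriv ℝ k f (L x + a)‖ * ∏ _i : Fin k, ‖L‖ :=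
          ContinuousMultilinearMap.norm_compContinuousLinearMap_le _ _
      _ ≤ ‖iteratedFDeriv ℝ k f (L x + a)‖ :=
          mul_le_of_le_one_right (norm_nonneg _)
            (Finset.prod_le_one (fun _ _ => norm_nonneg _) fun _ _ => hL)
      _ ≤ A (L x + a) := h.norm_le k hk _

theorem comp_clm (h : DerivLE n f A) {L : G →L[ℝ] E} (hL : ‖L‖ ≤ 1) :
    DerivLE n (fun x => f (L x)) fun x => A (L x) := by
  simpa using h.comp_affine hL 0

theorem comp_add_right (h : DerivLE n f A) (a : E) :
    DerivLE n (fun x => f (x + a)) fun x => A (x + a) :=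
  h.comp_affine (L := .id ℝ E) ContinuousLinearMap.norm_id_le a

theorem fderiv_apply (h : DerivLE (n + 1) f A) {v : E} (hv : ‖v‖ ≤ 1) :
    DerivLE n (fun x => fderiv ℝ f x v) A where
  contDiff := contDiff_fderiv_apply_const h.contDiff v
  norm_le k hk x := by
    have hdf : ContDiff ℝ n (fderiv ℝ f) := h.contDiff.fderiv_right (by norm_cast)
    calc ‖iteratedFDeriv ℝ k (fun x => fderiv ℝ f x v) x‖
        ≤ ‖v‖ * ‖iteratedFDeriv ℝ k (fderiv ℝ f) x‖ :=
          norm_iteratedFDeriv_clm_apply_const hdf.contDiffAt (by exact_mod_cast hk)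
      _ ≤ ‖iteratedFDeriv ℝ (k + 1) f x‖ := by
          rw [norm_iteratedFDeriv_fderiv]
          exact mul_le_of_le_one_left (norm_nonneg _) hv
      _ ≤ A x := h.norm_le _ (by omega) x

protected theorem dirDerivs {v : ι → E} (hv : ∀ i, ‖v i‖ ≤ 1) {l : List ι}
    (h : DerivLE (n + l.length) f A) :
    DerivLE n (dirDerivs v l f) A := by
  induction l generalizing f with
  | nil => exact h
  | cons i l ih => exact ih (h.fderiv_apply (hv i))

end DerivLE

theorem norm_iteratedFDeriv_le_of_basis [Fintype ι] [FiniteDimensional ℝ E]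
    (b : Module.Basis ι ℝ E) {n : ℕ} {f : E → F} (hf : ContDiff ℝ n f) {x : E} {M : ℝ}
    (hM : ∀ l : List ι, l.length = n → ‖dirDerivs b l f x‖ ≤ M) :
    ‖iteratedFDeriv ℝ n f x‖ ≤ (∑ i, ‖(b.coord i).toContinuousLinearMap‖) ^ n * M := by
  induction n generalizing f with
  | zero => simpa [dirDerivs] using hM [] rfl
  | succ n ih =>
    let φ (i : ι) : E →L[ℝ] ℝ := (b.coord i).toContinuousLinearMap
    let D (i : ι) (y : E) : F := fderiv ℝ f y (b i)
    have hD (i : ι) : ContDiff ℝ n (D i) := contDiff_fderiv_apply_const hf (b i)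
    have hDle (i : ι) : ‖iteratedFDeriv ℝ n (D i) x‖ ≤ (∑ i, ‖φ i‖) ^ n * M :=
      ih (hD i) fun l hl => hM (i :: l) (by simp [hl])
    have hexpand :
        fderiv ℝ f = fun y => ∑ i, ContinuousLinearMap.smulRightL ℝ E F (φ i) (D i y) := by
      ext y u
      calc fderiv ℝ f y u = fderiv ℝ f y (∑ i, b.repr u i • b i) := by rw [b.sum_repr]
        _ = ∑ i, b.repr u i • fderiv ℝ f y (b i) := by simp only [map_sum, map_smul]
        _ = _ := by simp [φ, D]
    have hsmul (i : ι) : ‖iteratedFDeriv ℝ n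
        (fun y => ContinuousLinearMap.smulRightL ℝ E F (φ i) (D i y)) x‖ ≤
          ‖φ i‖ * ((∑ i, ‖φ i‖) ^ n * M) := by
      have hle := (ContinuousLinearMap.smulRightL ℝ E F (φ i)).norm_iteratedFDeriv_comp_left
        (hD i).contDiffAt (x := x) le_rfl
      refine hle.trans ?_
      gcongr
      · exact ContinuousLinearMap.opNorm_le_bound _ (norm_nonneg _) fun y =>
          (ContinuousLinearMap.norm_smulRight_apply (φ i) y).le
      · exact hDle i
    have hsmooth (i : ι) :
        ContDiff ℝ n fun y => ContinuousLinearMap.smulRightL ℝ E F (φ i) (D i y) :=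
      (ContinuousLinearMap.contDiff _).comp (hD i)
    rw [← norm_iteratedFDeriv_fderiv, hexpand, iteratedFDeriv_sum fun i _ => hsmooth i,
      Finset.sum_apply]
    calc _ ≤ ∑ i, ‖φ i‖ * ((∑ i, ‖φ i‖) ^ n * M) := norm_sum_le_of_le _ fun i _ => hsmul i
      _ = (∑ i, ‖φ i‖) ^ (n + 1) * M := by rw [← Finset.sum_mul, pow_succ']; ring

theorem DerivLE.of_basis [Fintype ι] [FiniteDimensional ℝ E] (b : Module.Basis ι ℝ E) {n : ℕ}
    {f : E → F} {M : E → ℝ} (hf : ContDiff ℝ n f)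
    (hM : ∀ l : List ι, l.length ≤ n → ∀ x, ‖dirDerivs b l f x‖ ≤ M x) :
    DerivLE n f fun x => (1 + ∑ i, ‖(b.coord i).toContinuousLinearMap‖) ^ n * M x where
  contDiff := hf
  norm_le k hk x := by
    have hC : 0 ≤ ∑ i, ‖(b.coord i).toContinuousLinearMap‖ := by positivity
    have hMx : 0 ≤ M x := (norm_nonneg _).trans (hM [] (Nat.zero_le n) x)
    calc ‖iteratedFDeriv ℝ k f x‖
        ≤ (∑ i, ‖(b.coord i).toContinuousLinearMap‖) ^ k * M x :=
          norm_iteratedFDeriv_le_of_basis b (hf.of_le (by exact_mod_cast hk))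
            fun l hl => hM l (hl.trans_le hk) x
      _ ≤ (1 + ∑ i, ‖(b.coord i).toContinuousLinearMap‖) ^ k * M x := by gcongr; linarith
      _ ≤ (1 + ∑ i, ‖(b.coord i).toContinuousLinearMap‖) ^ n * M x := by gcongr; linarith

end Derivatives

section ParametricIntegral

variable {α E F W : Type*} [NormedAddCommGroup E] [NormedSpace ℝ E] [NormedAddCommGroup F]
  [NormedSpace ℝ F]

theorem hasFTaylorSeriesUpTo_integral_of_dominated [MeasurableSpace α] {μ : Measure α} {n : ℕ}
    {Φ : E → α → F} {b : α → ℝ} (hΦ : ∀ a, ContDiff ℝ n (Φ · a))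
    (hmeas : ∀ k ≤ n, ∀ x, AEStronglyMeasurable (fun a => iteratedFDeriv ℝ k (Φ · a) x) μ)
    (hle : ∀ k ≤ n, ∀ x a, ‖iteratedFDeriv ℝ k (Φ · a) x‖ ≤ b a) (hb : Integrable b μ) :
    HasFTaylorSeriesUpTo n (fun x => ∫ a, Φ x a ∂μ)
      fun x k => ∫ a, iteratedFDeriv ℝ k (Φ · a) x ∂μ := by
  have hint (k : ℕ) (hk : k ≤ n) (x : E) :
      Integrable (fun a => iteratedFDeriv ℝ k (Φ · a) x) μ :=
    hb.mono' (hmeas k hk x) (.of_forall (hle k hk x))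
  refine ⟨fun x => ?_, fun k hk x => ?_, fun k hk => ?_⟩
  · exact ((continuousMultilinearCurryFin0 ℝ E F).toContinuousLinearEquiv.integral_comp_comm
      fun a => iteratedFDeriv ℝ 0 (Φ · a) x).symm.trans (by simp)
  · have hk' : k + 1 ≤ n := by exact_mod_cast hk
    let curry : (E [×k + 1]→L[ℝ] F) ≃ₗᵢ[ℝ] (E →L[ℝ] E [×k]→L[ℝ] F) :=
      continuousMultilinearCurryLeftEquiv ℝ (fun _ => E) F
    have hcurry : ∫ a, curry (iteratedFDeriv ℝ (k + 1) (Φ · a) x) ∂μ =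
        curry (∫ a, iteratedFDeriv ℝ (k + 1) (Φ · a) x ∂μ) :=
      ContinuousLinearEquiv.integral_comp_comm (𝕜 := ℝ) (E := E [×k + 1]→L[ℝ] F)
        (F := E →L[ℝ] E [×k]→L[ℝ] F) curry.toContinuousLinearEquiv _
    have hderiv := hasFDerivAt_integral_of_dominated_of_fderiv_le (𝕜 := ℝ) (μ := μ)
      (F := fun x a => iteratedFDeriv ℝ k (Φ · a) x) (x₀ := x) (bound := b)
      (F' := fun x a => curry (iteratedFDeriv ℝ (k + 1) (Φ · a) x)) Filter.univ_mem
      (.of_forall (hmeas k (by omega))) (hint k (by omega) x)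
      (curry.continuous.comp_aestronglyMeasurable (hmeas (k + 1) hk' x))
      (.of_forall fun a y _ => (curry.norm_map _).trans_le (hle (k + 1) hk' y a)) hb
      (.of_forall fun a y _ => (hΦ a).ftaylorSeries.fderiv k hk y)
    rwa [hcurry] at hderiv
  · have hk' : k ≤ n := by exact_mod_cast hk
    exact continuous_of_dominated (hmeas k hk') (fun x => .of_forall (hle k hk' x)) hb
      (.of_forall fun a => (hΦ a).continuous_iteratedFDeriv (by exact_mod_cast hk'))

variable [NormedAddCommGroup W] [NormedSpace ℝ W]

theorem continuous_iteratedFDeriv_slice {n k : ℕ} {Φ : E → W → F}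
    (hΦ : ContDiff ℝ n fun p : E × W => Φ p.1 p.2) (hk : k ≤ n) (x : E) :
    Continuous fun w => iteratedFDeriv ℝ k (Φ · w) x := by
  let restrict := ContinuousMultilinearMap.compContinuousLinearMapL (𝕜 := ℝ) (F := F)
    fun _ : Fin k => ContinuousLinearMap.inl ℝ E W
  have hslice (w : W) : iteratedFDeriv ℝ k (Φ · w) x =
      restrict (iteratedFDeriv ℝ k (fun p : E × W => Φ p.1 p.2) (x, w)) := by
    have hshift : ContDiff ℝ n fun p : E × W => Φ (p + (0, w)).1 (p + (0, w)).2 :=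
      hΦ.comp (contDiff_id.add contDiff_const)
    have hcomp := (ContinuousLinearMap.inl ℝ E W).iteratedFDeriv_comp_right hshift x (i := k)
      (by exact_mod_cast hk)
    rw [iteratedFDeriv_comp_add_right' k (f := fun p : E × W => Φ p.1 p.2)] at hcomp
    simpa [restrict, Function.comp_def] using hcomp
  simp only [hslice]
  exact restrict.continuous.comp ((hΦ.continuous_iteratedFDeriv (by exact_mod_cast hk)).comp
    (Continuous.prodMk_right x))

theorem DerivLE.integral [MeasurableSpace W] [OpensMeasurableSpace W] [SecondCountableTopology W]
    {μ : Measure W} {n : ℕ} {Φ : E → W → F} {A : E → W → ℝ} {b : W → ℝ}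
    (hΦ : ContDiff ℝ n fun p : E × W => Φ p.1 p.2)
    (hle : ∀ w, DerivLE n (Φ · w) (A · w)) (hA : ∀ x, Integrable (A x) μ)
    (hAb : ∀ x w, A x w ≤ b w) (hb : Integrable b μ) :
    DerivLE n (fun x => ∫ w, Φ x w ∂μ) fun x => ∫ w, A x w ∂μ := by
  have htaylor := hasFTaylorSeriesUpTo_integral_of_dominated (fun w => (hle w).contDiff)
    (fun k hk x => (continuous_iteratedFDeriv_slice hΦ hk x).aestronglyMeasurable)
    (fun k hk x w => ((hle w).norm_le k hk x).trans (hAb x w)) hb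
  refine ⟨htaylor.contDiff, fun k hk x => ?_⟩
  rw [← htaylor.eq_iteratedFDeriv (by exact_mod_cast hk) x]
  exact norm_integral_le_of_norm_le (hA x) (.of_forall fun w => (hle w).norm_le k hk x)

end ParametricIntegral

section IntegrationByParts

variable {ι V : Type*} [NormedAddCommGroup V] [NormedSpace ℝ V] [MeasurableSpace V]
  [BorelSpace V] {μ : Measure V} {f q b : V → ℝ} {C : ℝ} {v : ι → V}

theorem DerivLE.integrable_mul {m n : ℕ} (hf : DerivLE m f fun _ => C) (hq : DerivLE n q b)
    (hb : Integrable b μ) : Integrable (fun z => f z * q z) μ :=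
  (hb.mono' hq.continuous.aestronglyMeasurable (.of_forall hq.norm_apply_le)).bdd_mul
    hf.continuous.aestronglyMeasurable (.of_forall hf.norm_apply_le)

theorem integral_mul_dirDerivs [FiniteDimensional ℝ V] [μ.IsAddHaarMeasure] (hv : ∀ i, ‖v i‖ ≤ 1)
    {l : List ι} (hf : DerivLE l.length f fun _ => C) (hq : DerivLE l.length q b)
    (hb : Integrable b μ) :
    ∫ z, f z * dirDerivs v l q z ∂μ = ∫ z, dirDerivs (-v) l.reverse f z * q z ∂μ := by
  induction l generalizing q with
  | nil => rfl
  | cons i l ih =>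
    have hq' : DerivLE l.length (fun z => fderiv ℝ q z (v i)) b := hq.fderiv_apply (hv i)
    have hfl : DerivLE 1 (dirDerivs (-v) l.reverse f) fun _ => C :=
      (hf.mono (by simp [add_comm]) fun _ => le_rfl).dirDerivs fun i => by simpa using hv i
    have hfl' : DerivLE 0 (fun z => fderiv ℝ (dirDerivs (-v) l.reverse f) z (v i)) fun _ => C :=
      hfl.fderiv_apply (hv i)
    have hfl_diff := hfl.contDiff.differentiable (by simp)
    have hq_diff := hq.contDiff.differentiable (by simp)
    calc ∫ z, f z * dirDerivs v (i :: l) q z ∂μ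
        = ∫ z, dirDerivs (-v) l.reverse f z * fderiv ℝ q z (v i) ∂μ :=
          ih (hf.mono (by simp) fun _ => le_rfl) hq'
      _ = -∫ z, fderiv ℝ (dirDerivs (-v) l.reverse f) z (v i) * q z ∂μ :=
          integral_mul_fderiv_eq_neg_fderiv_mul_of_integrable (hfl'.integrable_mul hq hb)
            (hfl.integrable_mul hq' hb) (hfl.integrable_mul hq hb) (fun z _ => hfl_diff z)
            fun z _ => hq_diff z
      _ = ∫ z, dirDerivs (-v) (i :: l).reverse f z * q z ∂μ := by
          rw [← integral_neg, List.reverse_cons, dirDerivs_append]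
          simp [dirDerivs]

end IntegrationByParts

section Gaussian

variable {V : Type*} [NormedAddCommGroup V]

theorem exp_neg_mul_norm_sq_div_le_one {e t : ℝ} (he : 0 ≤ e) (ht : 0 ≤ t) (x : V) :
    exp (-e * ‖x‖ ^ 2 / t) ≤ 1 := by
  rw [exp_le_one_iff, neg_mul, neg_div]
  exact neg_nonpos.2 (by positivity)

theorem exp_neg_mul_norm_sq_mul_le [NormedSpace ℝ V] {e σ τ : ℝ} (he : 0 < e) (hτ : 0 < τ)
    (x y w : V) :
    exp (-e * ‖w‖ ^ 2) * exp (-e * ‖x + σ • w - y‖ ^ 2 / τ) ≤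
      exp (-(e / 2) * ‖x - y‖ ^ 2 / (σ ^ 2 + τ)) * exp (-(e / 2) * ‖w‖ ^ 2) := by
  set a := ‖x + σ • w - y‖
  set b := ‖w‖
  have htri : ‖x - y‖ ≤ a + |σ| * b := by
    calc ‖x - y‖ = ‖(x + σ • w - y) - σ • w‖ := by congr 1; abel
      _ ≤ a + |σ| * b := (norm_sub_le _ _).trans_eq (by rw [norm_smul, Real.norm_eq_abs])
  have hsq : ‖x - y‖ ^ 2 / (σ ^ 2 + τ) ≤ a ^ 2 / τ + b ^ 2 := by
    have hgap : (a ^ 2 / τ + b ^ 2) * (σ ^ 2 + τ) - (a + |σ| * b) ^ 2 =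
        (|σ| * a - τ * b) ^ 2 / τ := by
      rw [← sq_abs σ]; field_simp; ring
    have hgap_nonneg : 0 ≤ (|σ| * a - τ * b) ^ 2 / τ := by positivity
    rw [div_le_iff₀ (by positivity)]
    calc ‖x - y‖ ^ 2 ≤ (a + |σ| * b) ^ 2 := by gcongr
      _ ≤ (a ^ 2 / τ + b ^ 2) * (σ ^ 2 + τ) := by linarith
  have ha : 0 ≤ a ^ 2 / τ := by positivity
  rw [← exp_add, ← exp_add, exp_le_exp, mul_div_assoc, mul_div_assoc]
  nlinarith

theorem integral_eq_abs_pow_finrank_mul_integral_comp_add_smul [NormedSpace ℝ V]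
    [FiniteDimensional ℝ V] [MeasurableSpace V] [BorelSpace V] (μ : Measure V)
    [μ.IsAddHaarMeasure] (f : V → ℝ) (x : V) {σ : ℝ} (hσ : σ ≠ 0) :
    ∫ z, f z ∂μ = ∫ w, |σ| ^ Module.finrank ℝ V * f (x + σ • w) ∂μ := by
  have hσ' : |σ| ^ Module.finrank ℝ V ≠ 0 := pow_ne_zero _ (abs_ne_zero.2 hσ)
  rw [integral_const_mul, Measure.integral_comp_smul μ (fun w => f (x + w)) σ,
    integral_add_left_eq_self f x, abs_inv, abs_pow, smul_eq_mul, mul_inv_cancel_left₀ hσ']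

variable [InnerProductSpace ℝ V] [FiniteDimensional ℝ V] [MeasurableSpace V] [BorelSpace V]

theorem integrable_exp_neg_mul_norm_sq {e : ℝ} (he : 0 < e) :
    Integrable fun w : V => exp (-e * ‖w‖ ^ 2) := by
  have hcexp := GaussianFourier.integrable_cexp_neg_mul_sq_norm_add (V := V) (b := (e : ℂ))
    (by simpa using he) 0 0
  refine hcexp.norm.congr (.of_forall fun w => ?_)
  simp [Complex.norm_exp, ← Complex.ofReal_pow]

end Gaussian

section TimePowers

theorem rpow_neg_half_le {r t : ℝ} (ht : 0 < t) (hr : t / 2 ≤ r) (m : ℕ) :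
    r ^ (-(m : ℝ) / 2) ≤ 2 ^ m * t ^ (-(m : ℝ) / 2) := by
  have hm : 0 ≤ (m : ℝ) := m.cast_nonneg
  calc r ^ (-(m : ℝ) / 2) ≤ (t / 2) ^ (-(m : ℝ) / 2) :=
        rpow_le_rpow_of_nonpos (by positivity) hr (by linarith [hm])
    _ = 2 ^ ((m : ℝ) / 2) * t ^ (-(m : ℝ) / 2) := by
        rw [div_rpow ht.le zero_le_two, neg_div, rpow_neg zero_le_two, div_inv_eq_mul, mul_comm]
    _ ≤ 2 ^ m * t ^ (-(m : ℝ) / 2) := by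
        rw [← rpow_natCast]
        gcongr
        · exact one_le_two
        · linarith [hm]

theorem abs_sqrt_pow_mul_rpow {t : ℝ} (ht : 0 < t) (d : ℕ) :
    |√t| ^ d * t ^ (-(d : ℝ) / 2) = 1 := by
  rw [abs_of_nonneg (sqrt_nonneg t), sqrt_eq_rpow, ← rpow_natCast, ← rpow_mul ht.le,
    ← rpow_add ht]
  ring_nf
  exact rpow_zero t

end TimePowers

section Kernels

/-- The composition `(x, y) ↦ ∫ K₁(x, z) K₂(z, y) dz` of two kernels on a measure space. -/
def kernelComp {V : Type*} [MeasureSpace V] (K₁ K₂ : V × V → ℝ) (p : V × V) : ℝ :=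
  ∫ z, K₁ (p.1, z) * K₂ (z, p.2)

theorem kernelComp_swap {V : Type*} [MeasureSpace V] (K₁ K₂ : V × V → ℝ) :
    kernelComp K₁ K₂ ∘ Prod.swap = kernelComp (K₂ ∘ Prod.swap) (K₁ ∘ Prod.swap) := by
  ext p
  simp only [kernelComp, Function.comp_apply, Prod.fst_swap, Prod.snd_swap, Prod.swap_prod_mk,
    mul_comm]

/-- `GaussianLE n t c e K`: the derivatives of `K` of order at most `n` are bounded by a Gaussian
in `x - y` of variance proportional to `t`. -/
def GaussianLE {V : Type*} [NormedAddCommGroup V] [NormedSpace ℝ V] (n : ℕ) (t c e : ℝ)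
    (K : V × V → ℝ) : Prop :=
  DerivLE n K fun p => c * exp (-e * ‖p.1 - p.2‖ ^ 2 / t)

/-- `DiagonalLE n σ c e K`: the functions `x ↦ |σ|^d K(x, x + σ w)` have derivatives of order at
most `n` bounded by a Gaussian in `w`. The factor `|σ|^d`, with `d` the dimension, is the Jacobian
of `w ↦ x + σ w`. -/
structure DiagonalLE {V : Type*} [NormedAddCommGroup V] [NormedSpace ℝ V] (n : ℕ) (σ c e : ℝ)
    (K : V × V → ℝ) : Prop where
  contDiff : ContDiff ℝ n K
  derivLE : ∀ w, DerivLE n (fun x => |σ| ^ Module.finrank ℝ V * K (x, x + σ • w))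
    fun _ => c * exp (-e * ‖w‖ ^ 2)

variable {ι V : Type*} [NormedAddCommGroup V] {n m : ℕ} {t s τ σ c c' c₁ c₂ e e' C : ℝ}
  {K K₁ K₂ : V × V → ℝ} {v : ι → V} {g : V → ℝ}

section Normed

variable [NormedSpace ℝ V]

theorem GaussianLE.const_nonneg (h : GaussianLE n t c e K) : 0 ≤ c :=
  nonneg_of_mul_nonneg_left (h.nonneg 0) (exp_pos _)

theorem DiagonalLE.const_nonneg (h : DiagonalLE n σ c e K) : 0 ≤ c :=
  nonneg_of_mul_nonneg_left ((h.derivLE 0).nonneg 0) (exp_pos _)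

theorem GaussianLE.mono (h : GaussianLE n t c e K) (ht : 0 ≤ t) (hmn : m ≤ n) (hc : c ≤ c')
    (he : e' ≤ e) : GaussianLE m t c' e' K :=
  have hc' : 0 ≤ c' := h.const_nonneg.trans hc
  DerivLE.mono h hmn fun p => by gcongr

theorem DiagonalLE.mono (h : DiagonalLE n σ c e K) (hmn : m ≤ n) (hc : c ≤ c') (he : e' ≤ e) :
    DiagonalLE m σ c' e' K :=
  have hc' : 0 ≤ c' := h.const_nonneg.trans hc
  ⟨h.contDiff.of_le (by exact_mod_cast hmn), fun w => (h.derivLE w).mono hmn fun _ => by gcongr⟩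

theorem GaussianLE.derivLE_const (h : GaussianLE n t c e K) (ht : 0 ≤ t) (he : 0 ≤ e) :
    DerivLE n K fun _ => c :=
  DerivLE.mono h le_rfl fun _ => mul_le_of_le_one_right h.const_nonneg
    (exp_neg_mul_norm_sq_div_le_one he ht _)

theorem GaussianLE.mul_snd (h : GaussianLE n t c e K) (hg : DerivLE n g fun _ => C) :
    GaussianLE n t (2 ^ n * (C * c)) e fun p => g p.2 * K p :=
  ((hg.comp_clm (ContinuousLinearMap.norm_snd_le ℝ V V)).mul h).mono le_rfl fun p => by
    simp only [mul_assoc, le_rfl]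

theorem DiagonalLE.mul_snd (h : DiagonalLE n σ c e K) (hg : DerivLE n g fun _ => C) :
    DiagonalLE n σ (2 ^ n * (C * c)) e fun p => g p.2 * K p where
  contDiff := (hg.contDiff.comp contDiff_snd).mul h.contDiff
  derivLE w := by
    convert ((hg.comp_add_right (σ • w)).mul (h.derivLE w)) using 2 <;> ring

protected theorem GaussianLE.dirDerivs {u : ι → V × V} (hu : ∀ i, ‖u i‖ ≤ 1) {l : List ι}
    (h : GaussianLE (n + l.length) t c e K) : GaussianLE n t c e (dirDerivs u l K) :=
  DerivLE.dirDerivs hu h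

theorem GaussianLE.swap (h : GaussianLE n t c e K) : GaussianLE n t c e (K ∘ Prod.swap) := by
  let L : V × V →L[ℝ] V × V := (ContinuousLinearMap.snd ℝ V V).prod (ContinuousLinearMap.fst ℝ V V)
  have hL : ‖L‖ ≤ 1 := ContinuousLinearMap.opNorm_le_bound _ zero_le_one fun p => by
    simp [L, Prod.norm_def, max_comm]
  refine (h.comp_clm hL).mono le_rfl fun p => ?_
  simp [L, norm_sub_rev]

theorem DiagonalLE.swap (h : DiagonalLE n σ c e K) : DiagonalLE n σ c e (K ∘ Prod.swap) where
  contDiff := h.contDiff.comp (contDiff_snd.prodMk contDiff_fst)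
  derivLE w := by
    simpa using (h.derivLE (-w)).comp_add_right (σ • w)

theorem DiagonalLE.derivLE_mul (h₁ : DiagonalLE n σ c₁ e K₁) (h₂ : GaussianLE n τ c₂ e K₂)
    (w : V) :
    DerivLE n
      (fun p : V × V => |σ| ^ Module.finrank ℝ V * K₁ (p.1, p.1 + σ • w) * K₂ (p.1 + σ • w, p.2))
      fun p => 2 ^ n * (c₁ * c₂) *
        (exp (-e * ‖w‖ ^ 2) * exp (-e * ‖p.1 + σ • w - p.2‖ ^ 2 / τ)) := by
  have hK₁ := (h₁.derivLE w).comp_clm (ContinuousLinearMap.norm_fst_le ℝ V V)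
  have hK₂ := DerivLE.comp_add_right h₂ ((σ • w, 0) : V × V)
  simp only [Prod.add_def, add_zero] at hK₂
  exact (hK₁.mul hK₂).mono le_rfl fun p => le_of_eq (by ring)

/-- `HeatKernelLE n t c e K`: up to order `n`, the kernel `K` satisfies the derivative bounds of
the class `𝒢` at time `t`, except that all the derivatives of order at most `n` are given the same
power of `t`, that of the order `n`. -/
structure HeatKernelLE (n : ℕ) (t c e : ℝ) (K : V × V → ℝ) : Prop where
  gaussian : GaussianLE n t (c * t ^ (-((n + Module.finrank ℝ V : ℕ) : ℝ) / 2)) e K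
  diagonal : DiagonalLE n √t c e K

theorem HeatKernelLE.mono (h : HeatKernelLE n t c e K) (ht : 0 < t) (hc : c ≤ c') (he : e' ≤ e) :
    HeatKernelLE n t c' e' K where
  gaussian := h.gaussian.mono ht.le le_rfl (by gcongr) he
  diagonal := h.diagonal.mono le_rfl hc he

theorem HeatKernelLE.mul_snd (h : HeatKernelLE n t c e K) (hg : DerivLE n g fun _ => C) :
    HeatKernelLE n t (2 ^ n * (C * c)) e fun p => g p.2 * K p where
  gaussian := by simpa only [mul_assoc] using h.gaussian.mul_snd hg
  diagonal := h.diagonal.mul_snd hg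

end Normed

variable [InnerProductSpace ℝ V] [FiniteDimensional ℝ V] [MeasurableSpace V] [BorelSpace V]

protected theorem DiagonalLE.kernelComp (h₁ : DiagonalLE n σ c₁ e K₁)
    (h₂ : GaussianLE n τ c₂ e K₂) (hσ : σ ≠ 0) (hτ : 0 < τ) (he : 0 < e) :
    GaussianLE n (σ ^ 2 + τ) (2 ^ n * (c₁ * c₂) * ∫ w : V, exp (-(e / 2) * ‖w‖ ^ 2)) (e / 2)
      (kernelComp K₁ K₂) := by
  have hc₁ := h₁.const_nonneg
  have hc₂ := h₂.const_nonneg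
  let Φ (p : V × V) (w : V) : ℝ :=
    |σ| ^ Module.finrank ℝ V * K₁ (p.1, p.1 + σ • w) * K₂ (p.1 + σ • w, p.2)
  have hchange : kernelComp K₁ K₂ = fun p => ∫ w, Φ p w := by
    ext p
    simp only [Φ, mul_assoc]
    exact integral_eq_abs_pow_finrank_mul_integral_comp_add_smul volume _ p.1 hσ
  have hΦ : ContDiff ℝ n fun q : (V × V) × V => Φ q.1 q.2 := by
    refine (contDiff_const.mul (h₁.contDiff.comp ?_)).mul (DerivLE.contDiff h₂ |>.comp ?_) <;>
      fun_prop
  let A (p : V × V) (w : V) : ℝ := 2 ^ n * (c₁ * c₂) *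
    (exp (-(e / 2) * ‖p.1 - p.2‖ ^ 2 / (σ ^ 2 + τ)) * exp (-(e / 2) * ‖w‖ ^ 2))
  have hΦA (w : V) : DerivLE n (Φ · w) (A · w) :=
    (h₁.derivLE_mul h₂ w).mono le_rfl fun p =>
      mul_le_mul_of_nonneg_left (exp_neg_mul_norm_sq_mul_le he hτ p.1 p.2 w) (by positivity)
  have hgauss : Integrable fun w : V => exp (-(e / 2) * ‖w‖ ^ 2) :=
    integrable_exp_neg_mul_norm_sq (half_pos he)
  have hAle (p : V × V) (w : V) : A p w ≤ 2 ^ n * (c₁ * c₂) * exp (-(e / 2) * ‖w‖ ^ 2) :=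
    mul_le_mul_of_nonneg_left (mul_le_of_le_one_left (exp_pos _).le
      (exp_neg_mul_norm_sq_div_le_one (half_pos he).le (by positivity) _)) (by positivity)
  rw [hchange]
  refine (DerivLE.integral hΦ hΦA (fun p => (hgauss.const_mul _).const_mul _) hAle
    (hgauss.const_mul _)).mono le_rfl fun p => ?_
  rw [integral_const_mul, integral_const_mul]
  exact le_of_eq (by ring)

protected theorem GaussianLE.kernelComp (h₁ : GaussianLE n τ c₁ e K₁) (h₂ : DiagonalLE n σ c₂ e K₂)
    (hσ : σ ≠ 0) (hτ : 0 < τ) (he : 0 < e) :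
    GaussianLE n (σ ^ 2 + τ) (2 ^ n * (c₁ * c₂) * ∫ w : V, exp (-(e / 2) * ‖w‖ ^ 2)) (e / 2)
      (kernelComp K₁ K₂) := by
  have hswap := (h₂.swap.kernelComp h₁.swap hσ hτ he).swap
  rwa [← kernelComp_swap, Function.comp_assoc, Prod.swap_swap_eq, Function.comp_id,
    mul_comm c₂] at hswap

theorem kernelComp_dirDerivs_eq (hv : ∀ i, ‖v i‖ ≤ 1) {l : List ι}
    (h₁ : GaussianLE l.length s c₁ e K₁) (h₂ : GaussianLE l.length τ c₂ e K₂) (hs : 0 < s)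
    (hτ : 0 < τ) (he : 0 < e) :
    kernelComp K₁ (dirDerivs (fun i => (v i, 0)) l K₂) =
      kernelComp (dirDerivs (fun i => (0, -v i)) l.reverse K₁) K₂ := by
  ext ⟨x, y⟩
  let inl := ContinuousLinearMap.inl ℝ V V
  let inr := ContinuousLinearMap.inr ℝ V V
  have hslice₁ : DerivLE l.length (fun z => K₁ (inr z + (x, 0))) fun _ => c₁ :=
    (h₁.derivLE_const hs.le he.le).comp_affine (ContinuousLinearMap.norm_inr_le_one ℝ V V) (x, 0)
  have hslice₂ : DerivLE l.length (fun z => K₂ (inl z + (0, y)))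
      fun z => c₂ * exp (-(e / τ) * ‖z - y‖ ^ 2) :=
    (DerivLE.comp_affine h₂ (ContinuousLinearMap.norm_inl_le_one ℝ V V) (0, y)).mono le_rfl
      fun z => le_of_eq (by simp [neg_div, div_mul_eq_mul_div])
  have hint : Integrable fun z => c₂ * exp (-(e / τ) * ‖z - y‖ ^ 2) :=
    ((integrable_exp_neg_mul_norm_sq (div_pos he hτ)).comp_sub_right y).const_mul c₂
  have hparts := integral_mul_dirDerivs hv hslice₁ hslice₂ hint
  rw [dirDerivs_comp_affine v inl (0, y) l (DerivLE.contDiff h₂),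
    dirDerivs_comp_affine (-v) inr (x, 0) l.reverse
      (by simpa using DerivLE.contDiff h₁)] at hparts
  simpa [kernelComp, inl, inr, Function.comp_def] using hparts

theorem HeatKernelLE.kernelComp_dirDerivs (hv : ∀ i, ‖v i‖ ≤ 1) {l : List ι}
    (h₁ : HeatKernelLE (n + l.length) s c₁ e K₁) (h₂ : HeatKernelLE (n + l.length) τ c₂ e K₂)
    (hs : 0 < s) (hτ : 0 < τ) (he : 0 < e) :
    GaussianLE n (s + τ)
      (2 ^ n * (c₁ * c₂) * (∫ w : V, exp (-(e / 2) * ‖w‖ ^ 2)) *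
        2 ^ (n + l.length + Module.finrank ℝ V) *
          (s + τ) ^ (-((n + l.length + Module.finrank ℝ V : ℕ) : ℝ) / 2))
      (e / 2) (kernelComp K₁ (dirDerivs (fun i => (v i, 0)) l K₂)) := by
  have hc₁ := h₁.diagonal.const_nonneg
  have hc₂ := h₂.diagonal.const_nonneg
  have hst : 0 < s + τ := add_pos hs hτ
  set I : ℝ := ∫ w : V, exp (-(e / 2) * ‖w‖ ^ 2)
  have hbound {r : ℝ} (hr : (s + τ) / 2 ≤ r) :=
    mul_le_mul_of_nonneg_left (rpow_neg_half_le hst hr (n + l.length + Module.finrank ℝ V))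
      (show 0 ≤ 2 ^ n * (c₁ * c₂) * I by positivity)
  rw [mul_assoc _ (2 ^ _)]
  rcases le_total s τ with hle | hle
  · have hu (i : ι) : ‖((v i, 0) : V × V)‖ ≤ 1 := by simpa using hv i
    have hcomp := (h₁.diagonal.mono (n.le_add_right _) le_rfl le_rfl).kernelComp
      (h₂.gaussian.dirDerivs hu) (sqrt_ne_zero'.2 hs) hτ he
    rw [sq_sqrt hs.le] at hcomp
    exact hcomp.mono hst.le le_rfl
      (le_trans (le_of_eq (by ring)) (hbound (r := τ) (by linarith))) le_rfl
  · have hu (i : ι) : ‖((0, -v i) : V × V)‖ ≤ 1 := by simpa using hv i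
    have h₁' : GaussianLE (n + l.reverse.length) s
        (c₁ * s ^ (-((n + l.length + Module.finrank ℝ V : ℕ) : ℝ) / 2)) e K₁ := by
      rw [List.length_reverse]
      exact h₁.gaussian
    have hparts := kernelComp_dirDerivs_eq hv
      (h₁.gaussian.mono hs.le (l.length.le_add_left n) le_rfl le_rfl)
      (h₂.gaussian.mono hτ.le (l.length.le_add_left n) le_rfl le_rfl) hs hτ he
    have hcomp := GaussianLE.kernelComp (h₁'.dirDerivs hu)
      (h₂.diagonal.mono (n.le_add_right _) le_rfl le_rfl)
      (sqrt_ne_zero'.2 hτ) hs he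
    rw [sq_sqrt hτ.le, add_comm τ] at hcomp
    rw [hparts]
    exact hcomp.mono hst.le le_rfl
      (le_trans (le_of_eq (by ring)) (hbound (r := s) (by linarith))) le_rfl

end Kernels

section MultiIndex

variable {d : ℕ}

/-- The standard basis of `ℝ^d`, as a basis of a vector space. -/
abbrev euBasis (d : ℕ) : Module.Basis (Fin d) ℝ (Eu d) :=
  (EuclideanSpace.basisFun (Fin d) ℝ).toBasis

theorem pderivs_eq_dirDerivs (l : List (Fin d)) (f : Eu d → ℝ) :
    pderivs l f = dirDerivs (euBasis d) l f := by
  induction l generalizing f with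
  | nil => rfl
  | cons i l ih => simp [pderivs, dirDerivs, ih]

theorem count_mToList (m : Fin d → ℕ) (i : Fin d) : (mToList m).count i = m i := by
  have hcount : (List.count i ∘ fun j => List.replicate (m j) j) =
      fun j => if j = i then m j else 0 := by
    ext j
    simp [List.count_replicate]
  rw [mToList, List.count_flatMap, hcount, ← List.ofFn_eq_map, List.sum_ofFn]
  simp

theorem length_mToList (m : Fin d → ℕ) : (mToList m).length = mlen m := by
  rw [mToList, mlen, List.length_flatMap, ← List.ofFn_eq_map, List.sum_ofFn]
  simp

theorem exists_perm_mToList (l : List (Fin d)) : ∃ α : Fin d → ℕ, l.Perm (mToList α) :=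
  ⟨fun i => l.count i, List.perm_iff_count.2 fun i => (count_mToList (l.count ·) i).symm⟩

theorem exists_perm_map_inr_append_map_inl {ι κ : Type*} (l : List (ι ⊕ κ)) :
    ∃ (l₁ : List ι) (l₂ : List κ), l.Perm (l₂.map Sum.inr ++ l₁.map Sum.inl) := by
  induction l with
  | nil => exact ⟨[], [], .nil⟩
  | cons a l ih =>
    obtain ⟨l₁, l₂, h⟩ := ih
    cases a with
    | inl i => exact ⟨i :: l₁, l₂, (h.cons _).trans List.perm_middle.symm⟩
    | inr j => exact ⟨l₁, j :: l₂, h.cons _⟩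

theorem finite_setOf_mlen_le (d n : ℕ) : {α : Fin d → ℕ | mlen α ≤ n}.Finite :=
  (Set.finite_Iic fun _ => n).subset fun _ hα i =>
    (Finset.single_le_sum (fun _ _ => Nat.zero_le _) (Finset.mem_univ i)).trans hα

theorem D2_eq_dirDerivs (α β : Fin d → ℕ) {f : Eu d → Eu d → ℝ}
    (hf : ContDiff ℝ (mlen α + mlen β : ℕ) fun p : Eu d × Eu d => f p.1 p.2) (x y : Eu d) :
    D2 α β f x y = dirDerivs ((euBasis d).prod (euBasis d))
      ((mToList β).map Sum.inr ++ (mToList α).map Sum.inl) (fun p => f p.1 p.2) (x, y) := by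
  let inl := ContinuousLinearMap.inl ℝ (Eu d) (Eu d)
  let inr := ContinuousLinearMap.inr ℝ (Eu d) (Eu d)
  let F (p : Eu d × Eu d) : ℝ := f p.1 p.2
  have hinl : (euBasis d).prod (euBasis d) ∘ Sum.inl = inl ∘ euBasis d := by ext i <;> simp [inl]
  have hinr : (euBasis d).prod (euBasis d) ∘ Sum.inr = inr ∘ euBasis d := by ext i <;> simp [inr]
  have hβ (x : Eu d) : pderivM β (f x) =
      fun y => dirDerivs (inr ∘ euBasis d) (mToList β) F (inr y + (x, 0)) := by
    rw [pderivM, pderivs_eq_dirDerivs, ← dirDerivs_comp_affine]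
    · simp [F, inr]
    · exact hf.of_le (by rw [length_mToList]; exact_mod_cast Nat.le_add_left _ _)
  have hα := dirDerivs_comp_affine (euBasis d) inl (0, y) (mToList α)
    (f := dirDerivs (inr ∘ euBasis d) (mToList β) F)
    (contDiff_dirDerivs (by rwa [length_mToList, length_mToList]))
  rw [dirDerivs_append, dirDerivs_map, dirDerivs_map, hinl, hinr, D2, pderivM,
    pderivs_eq_dirDerivs]
  simp only [hβ]
  simpa [inl, inr] using congrFun hα x

theorem DerivLE.abs_D2_le {α β : Fin d → ℕ} {f : Eu d → Eu d → ℝ} {A : Eu d × Eu d → ℝ}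
    (h : DerivLE (mlen α + mlen β) (fun p : Eu d × Eu d => f p.1 p.2) A) (x y : Eu d) :
    |D2 α β f x y| ≤ A (x, y) := by
  have hb (i : Fin d ⊕ Fin d) : ‖(euBasis d).prod (euBasis d) i‖ ≤ 1 := by
    cases i <;> simp [Prod.norm_def]
  rw [D2_eq_dirDerivs α β h.contDiff]
  refine (DerivLE.dirDerivs hb (h.mono ?_ fun _ => le_rfl)).norm_apply_le (n := 0) (x, y)
  simp [length_mToList, add_comm]

theorem exists_const_derivLE_of_pderivM (d n : ℕ) :
    ∃ C : ℝ, ∀ {f : Eu d → ℝ} {M : Eu d → ℝ}, ContDiff ℝ n f →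
      (∀ α : Fin d → ℕ, mlen α ≤ n → ∀ x, |pderivM α f x| ≤ M x) →
        DerivLE n f fun x => C * M x := by
  refine ⟨_, fun {f M} hf hM => .of_basis (euBasis d) hf fun l hl x => ?_⟩
  obtain ⟨α, hα⟩ := exists_perm_mToList l
  rw [dirDerivs_perm _ hα (hf.of_le (by exact_mod_cast hl)), ← pderivs_eq_dirDerivs]
  exact hM α (by rwa [← length_mToList, ← hα.length_eq]) x

theorem exists_const_derivLE_of_D2 (d n : ℕ) :
    ∃ C : ℝ, ∀ {f : Eu d → Eu d → ℝ} {M : Eu d × Eu d → ℝ},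
      ContDiff ℝ n (fun p : Eu d × Eu d => f p.1 p.2) →
      (∀ α β : Fin d → ℕ, mlen α + mlen β ≤ n → ∀ x y, |D2 α β f x y| ≤ M (x, y)) →
        DerivLE n (fun p : Eu d × Eu d => f p.1 p.2) fun p => C * M p := by
  refine ⟨_, fun {f M} hf hM =>
    .of_basis ((euBasis d).prod (euBasis d)) hf fun l hl p => ?_⟩
  obtain ⟨l₁, l₂, hl₁₂⟩ := exists_perm_map_inr_append_map_inl l
  obtain ⟨α, hα⟩ := exists_perm_mToList l₁
  obtain ⟨β, hβ⟩ := exists_perm_mToList l₂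
  have hperm : l.Perm ((mToList β).map Sum.inr ++ (mToList α).map Sum.inl) :=
    hl₁₂.trans ((hβ.map _).append (hα.map _))
  have hlen : mlen α + mlen β ≤ n := by
    simpa [length_mToList, add_comm] using hperm.length_eq.symm.trans_le hl
  rw [dirDerivs_perm _ hperm (hf.of_le (by exact_mod_cast hl)),
    ← D2_eq_dirDerivs α β (hf.of_le (by exact_mod_cast hlen))]
  exact hM α β hlen p.1 p.2

end MultiIndex

section BoundedFamilies

open Filter Topology

variable {d : ℕ} {B B' B₁ B₂ : Set (ℝ → Eu d → Eu d → ℝ)} {g : Eu d → ℝ}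

theorem exists_uniform_constants {I : Type*} {S : Set I} (hS : S.Finite)
    {Q : I → ℝ → ℝ → Prop}
    (hQ : ∀ i c e c' e', 0 ≤ c → c ≤ c' → e' ≤ e → Q i c e → Q i c' e')
    (h : ∀ i, ∃ c ≥ 0, ∃ e > 0, Q i c e) : ∃ c ≥ 0, ∃ e > 0, ∀ i ∈ S, Q i c e := by
  have hevent (i : I) : ∀ᶠ p : ℝ × ℝ in atTop ×ˢ 𝓝[>] 0, Q i p.1 p.2 := by
    obtain ⟨c, hc, e, he, hQi⟩ := h i
    filter_upwards [prod_mem_prod (Ici_mem_atTop c) (Ioc_mem_nhdsGT he)] with p hp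
    exact hQ i c e p.1 p.2 hc hp.1 hp.2.2 hQi
  have hpos : ∀ᶠ p : ℝ × ℝ in atTop ×ˢ 𝓝[>] 0, 0 ≤ p.1 ∧ 0 < p.2 :=
    prod_mem_prod (Ici_mem_atTop 0) self_mem_nhdsWithin
  obtain ⟨⟨c, e⟩, ⟨hc, he⟩, hce⟩ :=
    (hpos.and ((eventually_all_finite hS).2 fun i _ => hevent i)).exists
  exact ⟨c, hc, e, he, hce⟩

theorem exists_derivLE_const (hg : ContDiff ℝ (⊤ : ℕ∞) g)
    (hgb : ∀ γ : Fin d → ℕ, ∃ C : ℝ, ∀ x, |pderivM γ g x| ≤ C) (n : ℕ) :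
    ∃ C, DerivLE n g fun _ => C := by
  choose C hC using hgb
  obtain ⟨M, hM⟩ := ((finite_setOf_mlen_le d n).image C).bddAbove
  obtain ⟨C', hC'⟩ := exists_const_derivLE_of_pderivM d n
  exact ⟨C' * M, hC' (hg.of_le (by exact_mod_cast le_top)) fun γ hγ x =>
    (hC γ x).trans (hM (Set.mem_image_of_mem C hγ))⟩

/-- `IsBoundedG B`: the set `B` satisfies the smoothness and the uniform estimates that define a
bounded subset of `𝒢(ℝ^d)`. Joint measurability in `(t, x, y)` is not included. -/
structure IsBoundedG (B : Set (ℝ → Eu d → Eu d → ℝ)) : Prop where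
  contDiff : ∀ P ∈ B, ∀ t ∈ Set.Ioc (0 : ℝ) 1,
    ContDiff ℝ (⊤ : ℕ∞) fun p : Eu d × Eu d => P t p.1 p.2
  bound : ∀ α β : Fin d → ℕ, ∃ c₁ ≥ (0 : ℝ), ∃ c₂ > (0 : ℝ), ∀ P ∈ B,
    ∀ t ∈ Set.Ioc (0 : ℝ) 1, ∀ x y : Eu d,
      |D2 α β (P t) x y| ≤ c₁ * t ^ (-((mlen α + mlen β + d : ℕ) : ℝ) / 2) *
        exp (-c₂ * ‖x - y‖ ^ 2 / t) ∧
      |pderivM α (fun x' => P t x' (x' + √t • y)) x| ≤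
        c₁ * t ^ (-(d : ℝ) / 2) * exp (-c₂ * ‖y‖ ^ 2)

/-- `IsBoundedH l S`: the set `S` satisfies the smoothness and the uniform estimates that define a
bounded subset of `𝓗_l(ℝ^d)`. Joint measurability in `(s, t, x, y)` is not included. -/
structure IsBoundedH (l : ℕ) (S : Set (ℝ → ℝ → Eu d → Eu d → ℝ)) : Prop where
  contDiff : ∀ Q ∈ S, ∀ s t : ℝ, 0 < s → s < t → t ≤ 1 →
    ContDiff ℝ (⊤ : ℕ∞) fun p : Eu d × Eu d => Q s t p.1 p.2
  bound : ∀ α β : Fin d → ℕ, ∃ c₁ ≥ (0 : ℝ), ∃ c₂ > (0 : ℝ), ∀ Q ∈ S,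
    ∀ s t : ℝ, 0 < s → s < t → t ≤ 1 → ∀ x y : Eu d,
      |D2 α β (Q s t) x y| ≤ c₁ * t ^ (-((mlen α + mlen β + d + l : ℕ) : ℝ) / 2) *
        exp (-c₂ * ‖x - y‖ ^ 2 / t)

theorem IsBoundedG.mono (h : IsBoundedG B) (hB : B' ⊆ B) : IsBoundedG B' where
  contDiff P hP := h.contDiff P (hB hP)
  bound α β :=
    let ⟨c₁, hc₁, c₂, hc₂, hbound⟩ := h.bound α β
    ⟨c₁, hc₁, c₂, hc₂, fun P hP => hbound P (hB hP)⟩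

theorem IsBoundedG.exists_uniform_bound (h : IsBoundedG B) (n : ℕ) :
    ∃ c ≥ (0 : ℝ), ∃ e > (0 : ℝ), ∀ α β : Fin d → ℕ, mlen α + mlen β ≤ n → ∀ P ∈ B,
      ∀ t ∈ Set.Ioc (0 : ℝ) 1, ∀ x y : Eu d,
        |D2 α β (P t) x y| ≤ c * t ^ (-((n + d : ℕ) : ℝ) / 2) * exp (-e * ‖x - y‖ ^ 2 / t) ∧
        |pderivM α (fun x' => P t x' (x' + √t • y)) x| ≤
          c * t ^ (-(d : ℝ) / 2) * exp (-e * ‖y‖ ^ 2) := by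
  have hfinite : {a : (Fin d → ℕ) × (Fin d → ℕ) | mlen a.1 + mlen a.2 ≤ n}.Finite :=
    ((finite_setOf_mlen_le d n).prod (finite_setOf_mlen_le d n)).subset fun a ha =>
      ⟨(Nat.le_add_right _ _).trans ha, (Nat.le_add_left _ _).trans ha⟩
  obtain ⟨c, hc, e, he, hbound⟩ := exists_uniform_constants hfinite
    (Q := fun a c e => ∀ P ∈ B, ∀ t ∈ Set.Ioc (0 : ℝ) 1, ∀ x y : Eu d,
      |D2 a.1 a.2 (P t) x y| ≤ c * t ^ (-((mlen a.1 + mlen a.2 + d : ℕ) : ℝ) / 2) *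
        exp (-e * ‖x - y‖ ^ 2 / t) ∧
      |pderivM a.1 (fun x' => P t x' (x' + √t • y)) x| ≤
        c * t ^ (-(d : ℝ) / 2) * exp (-e * ‖y‖ ^ 2))
    (fun a c e c' e' hc hcc' hee' hQ P hP t ht x y => by
      have ht₀ : 0 < t := ht.1
      have hc' : 0 ≤ c' := hc.trans hcc'
      refine (hQ P hP t ht x y).imp (fun h => h.trans ?_) fun h => h.trans ?_ <;> gcongr)
    fun a => h.bound a.1 a.2
  refine ⟨c, hc, e, he, fun α β hαβ P hP t ht x y =>
    (hbound (α, β) hαβ P hP t ht x y).imp_left fun hD2 => hD2.trans ?_⟩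
  gcongr ?_ * ?_ * _
  refine rpow_le_rpow_of_exponent_ge ht.1 ht.2 ?_
  gcongr

theorem IsBoundedG.exists_heatKernelLE (h : IsBoundedG B) (n : ℕ) :
    ∃ c, ∃ e > (0 : ℝ), ∀ P ∈ B, ∀ t ∈ Set.Ioc (0 : ℝ) 1,
      HeatKernelLE n t c e fun p => P t p.1 p.2 := by
  obtain ⟨c, hc, e, he, hbound⟩ := h.exists_uniform_bound n
  obtain ⟨C₁, hpderivM⟩ := exists_const_derivLE_of_pderivM d n
  obtain ⟨C₂, hD2⟩ := exists_const_derivLE_of_D2 d n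
  refine ⟨max C₁ C₂ * c, e, he, fun P hP t ht => ?_⟩
  have ht₀ : 0 < t := ht.1
  have hsmooth : ContDiff ℝ n fun p : Eu d × Eu d => P t p.1 p.2 :=
    (h.contDiff P hP t ht).of_le (by exact_mod_cast le_top)
  refine ⟨?_, hsmooth, fun w => ?_⟩
  · rw [finrank_euclideanSpace_fin]
    refine (hD2 hsmooth
      (M := fun p => c * t ^ (-((n + d : ℕ) : ℝ) / 2) * exp (-e * ‖p.1 - p.2‖ ^ 2 / t))
      fun α β hαβ x y => (hbound α β hαβ P hP t ht x y).1).mono le_rfl fun p => ?_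
    rw [← mul_assoc, ← mul_assoc]
    gcongr
    exact le_max_right C₁ C₂
  · have hdiag : ContDiff ℝ n fun x => P t x (x + √t • w) :=
      hsmooth.comp (contDiff_id.prodMk (contDiff_id.add contDiff_const))
    have hle := (hpderivM hdiag (M := fun _ => _) fun α hα x =>
      (hbound α 0 (by simpa [mlen] using hα) P hP t ht x w).2).const_smul (|√t| ^ d)
    rw [finrank_euclideanSpace_fin]
    refine hle.mono le_rfl fun _ => ?_
    calc _ = C₁ * c * exp (-e * ‖w‖ ^ 2) * (|√t| ^ d * t ^ (-(d : ℝ) / 2)) := by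
          rw [abs_of_nonneg (pow_nonneg (abs_nonneg _) d)]; ring
      _ ≤ max C₁ C₂ * c * exp (-e * ‖w‖ ^ 2) := by
          rw [abs_sqrt_pow_mul_rpow ht₀, mul_one]
          gcongr
          exact le_max_left C₁ C₂

theorem convG_eq_kernelComp (γ : Fin d → ℕ) {P Q : ℝ → Eu d → Eu d → ℝ} {s t : ℝ}
    (hQ : ContDiff ℝ (mlen γ) fun p : Eu d × Eu d => Q (t - s) p.1 p.2) :
    (fun p : Eu d × Eu d => convG g γ P Q s t p.1 p.2) =
      kernelComp (fun p => g p.2 * P s p.1 p.2)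
        (dirDerivs (fun i => (euBasis d i, 0)) (mToList γ) fun p => Q (t - s) p.1 p.2) := by
  let inl := ContinuousLinearMap.inl ℝ (Eu d) (Eu d)
  have hslice (y : Eu d) := dirDerivs_comp_affine (euBasis d) inl (0, y) (mToList γ)
    (by rwa [length_mToList])
  simp only [inl, ContinuousLinearMap.inl_apply, Prod.mk_add_mk, zero_add, add_zero] at hslice
  ext ⟨x, y⟩
  simp only [convG, kernelComp, pderivM, pderivs_eq_dirDerivs, hslice, mul_assoc]
  rfl

theorem IsBoundedG.exists_gaussianLE_convG (hg : ContDiff ℝ (⊤ : ℕ∞) g)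
    (hgb : ∀ γ : Fin d → ℕ, ∃ C : ℝ, ∀ x, |pderivM γ g x| ≤ C) (γ : Fin d → ℕ)
    (h₁ : IsBoundedG B₁) (h₂ : IsBoundedG B₂) (n : ℕ) :
    ∃ c, ∃ e > (0 : ℝ), ∀ P₁ ∈ B₁, ∀ P₂ ∈ B₂, ∀ s t : ℝ, 0 < s → s < t → t ≤ 1 →
      GaussianLE n t (c * t ^ (-((n + mlen γ + d : ℕ) : ℝ) / 2)) e
        fun p => convG g γ P₁ P₂ s t p.1 p.2 := by
  obtain ⟨C, hC⟩ := exists_derivLE_const hg hgb (n + mlen γ)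
  obtain ⟨c₁, e₁, he₁, hP₁⟩ := h₁.exists_heatKernelLE (n + mlen γ)
  obtain ⟨c₂, e₂, he₂, hP₂⟩ := h₂.exists_heatKernelLE (n + mlen γ)
  let I : ℝ := ∫ w : Eu d, exp (-(min e₁ e₂ / 2) * ‖w‖ ^ 2)
  refine ⟨2 ^ n * (2 ^ (n + mlen γ) * (C * c₁) * c₂) * I * 2 ^ (n + mlen γ + d), min e₁ e₂ / 2,
    half_pos (lt_min he₁ he₂), fun P₁ h₁ P₂ h₂ s t hs hst ht => ?_⟩
  have hτ : 0 < t - s := sub_pos.2 hst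
  have hK₁ := ((hP₁ P₁ h₁ s ⟨hs, by linarith⟩).mono hs le_rfl (min_le_left e₁ e₂)).mul_snd hC
  have hK₂ := (hP₂ P₂ h₂ (t - s) ⟨hτ, by linarith⟩).mono hτ le_rfl (min_le_right e₁ e₂)
  rw [convG_eq_kernelComp γ (hK₂.diagonal.contDiff.of_le (by exact_mod_cast Nat.le_add_left _ _))]
  rw [← length_mToList] at hK₁ hK₂
  have hcomp := HeatKernelLE.kernelComp_dirDerivs (v := euBasis d) (fun i => by simp) hK₁ hK₂ hs
    hτ (lt_min he₁ he₂)
  rwa [add_sub_cancel, length_mToList, finrank_euclideanSpace_fin] at hcomp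

theorem statement0_general (hg : ContDiff ℝ (⊤ : ℕ∞) g)
    (hgb : ∀ γ : Fin d → ℕ, ∃ C : ℝ, ∀ x, |pderivM γ g x| ≤ C) (γ : Fin d → ℕ)
    (h₁ : IsBoundedG B₁) (h₂ : IsBoundedG B₂) :
    IsBoundedH (mlen γ) (Set.image2 (convG g γ) B₁ B₂) where
  contDiff := by
    rintro _ ⟨P₁, hP₁, P₂, hP₂, rfl⟩ s t hs hst ht
    refine contDiff_infty.2 fun n => ?_
    obtain ⟨c, e, -, hle⟩ := h₁.exists_gaussianLE_convG hg hgb γ h₂ n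
    exact DerivLE.contDiff (hle P₁ hP₁ P₂ hP₂ s t hs hst ht)
  bound α β := by
    obtain ⟨c, e, he, hle⟩ := h₁.exists_gaussianLE_convG hg hgb γ h₂ (mlen α + mlen β)
    refine ⟨max c 0, le_max_right c 0, e, he, ?_⟩
    rintro _ ⟨P₁, hP₁, P₂, hP₂, rfl⟩ s t hs hst ht x y
    refine (DerivLE.abs_D2_le (hle P₁ hP₁ P₂ hP₂ s t hs hst ht) x y).trans ?_
    rw [add_right_comm _ (mlen γ)]
    have ht₀ : 0 < t := hs.trans hst
    gcongr
    exact le_max_left c 0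

end BoundedFamilies

/-- Proposition 5 (i): if `B₁, B₂` are bounded subsets of `𝒢(ℝ^d)` and `g ∈ C_b^∞(ℝ^d)`,
`γ ∈ ℕ^d`, then `{π₁ *_{g,γ} π₂ | π₁ ∈ B₁, π₂ ∈ B₂}` is a bounded subset of `𝓗_{|γ|}(ℝ^d)`. -/
theorem statement0 (d : ℕ) (hd : 1 ≤ d)
    (g : Eu d → ℝ) (hg : ContDiff ℝ (⊤ : ℕ∞) g)
    (hgb : ∀ γ : Fin d → ℕ, ∃ C : ℝ, ∀ x, |pderivM γ g x| ≤ C)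
    (γ : Fin d → ℕ)
    (B₁ B₂ : Set (ℝ → Eu d → Eu d → ℝ))
    -- the members of `B₁ ∪ B₂` are measurable in `(t,x,y)`
    (hmeas : ∀ P ∈ B₁ ∪ B₂, Measurable fun p : ℝ × Eu d × Eu d => P p.1 p.2.1 p.2.2)
    -- and infinitely differentiable in `(x,y)` for every `t ∈ (0,1]`
    (hsmooth : ∀ P ∈ B₁ ∪ B₂, ∀ t ∈ Set.Ioc (0:ℝ) 1,
      ContDiff ℝ (⊤ : ℕ∞) fun p : Eu d × Eu d => P t p.1 p.2)
    -- `B₁` and `B₂` are bounded subsets of `𝒢(ℝ^d)`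
    (hG : ∀ α β : Fin d → ℕ, ∃ c₁ ≥ (0:ℝ), ∃ c₂ > (0:ℝ), ∀ P ∈ B₁ ∪ B₂,
      ∀ t ∈ Set.Ioc (0:ℝ) 1, ∀ x y : Eu d,
        |D2 α β (P t) x y| ≤ c₁ * t ^ (-((mlen α + mlen β + d : ℕ) : ℝ) / 2) *
            Real.exp (-c₂ * ‖x - y‖ ^ 2 / t) ∧
        |pderivM α (fun x' => P t x' (x' + Real.sqrt t • y)) x| ≤
          c₁ * t ^ (-(d : ℝ) / 2) * Real.exp (-c₂ * ‖y‖ ^ 2)) :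
    -- conclusion: the convolutions form a bounded subset of `𝓗_{|γ|}(ℝ^d)`
    (∀ P₁ ∈ B₁, ∀ P₂ ∈ B₂, ∀ s t : ℝ, 0 < s → s < t → t ≤ 1 →
      ContDiff ℝ (⊤ : ℕ∞) fun p : Eu d × Eu d => convG g γ P₁ P₂ s t p.1 p.2) ∧
    (∀ α β : Fin d → ℕ, ∃ c₁ ≥ (0:ℝ), ∃ c₂ > (0:ℝ), ∀ P₁ ∈ B₁, ∀ P₂ ∈ B₂,
      ∀ s t : ℝ, 0 < s → s < t → t ≤ 1 → ∀ x y : Eu d,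
        |D2 α β (convG g γ P₁ P₂ s t) x y| ≤
          c₁ * t ^ (-((mlen α + mlen β + d + mlen γ : ℕ) : ℝ) / 2) *
            Real.exp (-c₂ * ‖x - y‖ ^ 2 / t)) := by
  have hB : IsBoundedG (B₁ ∪ B₂) := ⟨hsmooth, hG⟩
  have hconv := statement0_general hg hgb γ (hB.mono Set.subset_union_left)
    (hB.mono Set.subset_union_right)
  exact ⟨by simpa only [Set.forall_mem_image2] using hconv.contDiff,
    by simpa only [Set.forall_mem_image2] using hconv.bound⟩
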